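/- Let M be a Coxeter matrix on a countably infinite type S with M s t = 0 or M s t ≥ 4 for all s ≠ t (extra-large type, 0 encoding ∞), let A be the associated Artin group with generators a : S → A, and fix an injective enumeration s : ℕ → S. Then for every k ∈ ℕ, the normalized moment (2N)^{-k/2} · #{((i_1, ε_1), …, (i_k, ε_k)) ∈ ({0, …, N−1} × {+1, −1})^k : a_{s(i_1)}^{ε_1} · … · a_{s(i_k)}^{ε_k} = 1 in A} converges, as N → ∞, to 0 if k is odd and to the Catalan number C_n = (1/(n+1))·binom(2n, n) if k = 2n is even. -/

import Mathlib

open Filter Topology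

/-- The alternating word `s·t·s·t·⋯` with `m` factors (starting with `s`), as an element of the
free group on `S`. -/
def artinAltWord {S : Type*} (s t : S) (m : ℕ) : FreeGroup S :=
  (List.ofFn fun j : Fin m => FreeGroup.of (if (j : ℕ) % 2 = 0 then s else t)).prod

/-- The Artin relators associated to a Coxeter matrix `M` : for each pair `s ≠ t` with
`2 ≤ M s t` (finite), the relator `alt(s, t, M s t) · alt(t, s, M s t)⁻¹` expressing
`s·t·s·⋯ = t·s·t·⋯` (both sides with `M s t` factors). -/
def artinRelators {S : Type*} (M : CoxeterMatrix S) : Set (FreeGroup S) :=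
  {x | ∃ s t : S, s ≠ t ∧ 2 ≤ M s t ∧
    x = artinAltWord s t (M s t) * (artinAltWord t s (M s t))⁻¹}

/-- The Artin group associated to a Coxeter matrix `M`. -/
abbrev ArtinGroup {S : Type*} (M : CoxeterMatrix S) : Type _ :=
  PresentedGroup (artinRelators M)

/-- The generators of the Artin group associated to `M`. -/
def artinGen {S : Type*} (M : CoxeterMatrix S) (s : S) : ArtinGroup M :=
  PresentedGroup.of s

/-! The Artin group acts on the space with basis `S` by a deformation of the geometric
representation of its Coxeter group, in which the generator `s` multiplies its basis vector by `-r²`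
instead of `-1`. If `r > 0` and no two distinct generators commute, the coordinate functional of
each generator is negative on the other basis vectors, so that a word without repeated generators
maps any further basis vector to a nonnegative vector.

Comparing coordinates in this action shows that no generator occurs exactly once in a word that is
trivial in the Artin group, and, by playing `r = 2` against `r = 1 / 2`, that if all generators
occur at most twice then two adjacent letters cancel. Hence a trivial word of length `k` is freely
trivial or uses fewer than `k / 2` generators. There are only `O(N ^ ((k - 1) / 2))` words of the
latter kind, and the freely trivial words of length `2n` number `C_n (2N) ^ n` to leading order,
with `C_n` the Catalan number: writing them as `a u a⁻¹ v` with `u` and `v` freely trivial, in a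
unique way if `u` avoids the generator of `a`, gives the Catalan recurrence. -/

section AlternatingWord

variable {S : Type*}

theorem artinAltWord_zero (s t : S) : artinAltWord s t 0 = 1 := by
  simp [artinAltWord]

theorem artinAltWord_succ (s t : S) (m : ℕ) :
    artinAltWord s t (m + 1) = FreeGroup.of s * artinAltWord t s m := by
  have hparity : ∀ j : ℕ, ((j + 1) % 2 = 0) = ¬ j % 2 = 0 := fun j ↦ by grind
  simp only [artinAltWord, List.ofFn_succ, List.prod_cons, Fin.val_zero, Nat.zero_mod, if_true,
    Fin.val_succ, hparity, ite_not]

/-- The failure of the braid relation of length `n` in the images of two generators in a ring. -/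
def braidDefect {R : Type*} [Ring R] (f : S → Rˣ) (s t : S) (n : ℕ) : R :=
  (FreeGroup.lift f (artinAltWord s t n) : R) - FreeGroup.lift f (artinAltWord t s n)

theorem braidDefect_zero {R : Type*} [Ring R] (f : S → Rˣ) (s t : S) :
    braidDefect f s t 0 = 0 := by
  simp [braidDefect, artinAltWord_zero]

theorem braidDefect_one {R : Type*} [Ring R] (f : S → Rˣ) (s t : S) :
    braidDefect f s t 1 = f s - f t := by
  simp [braidDefect, artinAltWord_succ, artinAltWord_zero]

theorem braidDefect_add_two {k R : Type*} [CommRing k] [Ring R] [Algebra k R] {f : S → Rˣ}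
    {c : k} (hf : ∀ s, (f s : R) * f s = (1 + c) • (f s : R) - c • 1) (s t : S) (n : ℕ) :
    braidDefect f s t (n + 2) =
      ((1 + c) • (1 : R) - f s - f t) * braidDefect f s t (n + 1) + c • braidDefect f s t n := by
  simp only [braidDefect, artinAltWord_succ, map_mul, FreeGroup.lift_apply_of, Units.val_mul]
  generalize ((FreeGroup.lift f (artinAltWord s t n) : Rˣ) : R) = P
  generalize ((FreeGroup.lift f (artinAltWord t s n) : Rˣ) : R) = Q
  simp only [sub_mul, mul_sub, ← mul_assoc, hf, smul_mul_assoc, one_mul, smul_sub]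
  abel

end AlternatingWord

section TrigonometricRecurrence

variable {V : Type*} [AddCommGroup V] [Module ℝ V]

theorem sin_pi_div_ne_zero {m : ℕ} (hm : 2 ≤ m) : Real.sin (Real.pi / m) ≠ 0 := by
  have hm' : (1 : ℝ) < m := by exact_mod_cast hm
  exact (Real.sin_pos_of_pos_of_lt_pi (by positivity) (div_lt_self Real.pi_pos hm')).ne'

open Real in
theorem sin_smul_eq_of_recurrence {H : V →ₗ[ℝ] V} {d : ℕ → V} {x y : V} {ρ θ : ℝ}
    (hx : H x = (2 * ρ * cos θ) • x) (hy : H y = -(2 * ρ * cos θ) • y)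
    (h_zero : d 0 = 0) (h_one : d 1 = x + y)
    (h_rec : ∀ n, d (n + 2) = H (d (n + 1)) - ρ ^ 2 • d n) (n : ℕ) :
    (ρ * sin θ) • d n = sin (n * θ) • (ρ ^ n • x - (-ρ) ^ n • y) := by
  induction n using Nat.twoStepInduction with
  | zero => simp [h_zero]
  | one => rw [h_one, Nat.cast_one, one_mul]; module
  | more n ih ih' =>
    have hsin : sin ((n + 2 : ℕ) * θ) = 2 * cos θ * sin ((n + 1 : ℕ) * θ) - sin (n * θ) := by
      have h := two_mul_sin_mul_cos ((n + 1 : ℕ) * θ) θ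
      rw [show (n + 1 : ℕ) * θ - θ = n * θ by push_cast; ring,
        show (n + 1 : ℕ) * θ + θ = (n + 2 : ℕ) * θ by push_cast; ring] at h
      linarith
    calc (ρ * sin θ) • d (n + 2)
        = H ((ρ * sin θ) • d (n + 1)) - ρ ^ 2 • (ρ * sin θ) • d n := by
          rw [h_rec, map_smul]; module
      _ = sin ((n + 2 : ℕ) * θ) • (ρ ^ (n + 2) • x - (-ρ) ^ (n + 2) • y) := by
          rw [ih, ih', map_smul, map_sub, map_smul, map_smul, hx, hy, hsin]
          module

end TrigonometricRecurrence

section Words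

variable {S : Type*}

theorem lift_mk_append_eq_one_comm {G : Type*} [Group G] (f : S → G) (p q : List (S × Bool)) :
    FreeGroup.lift f (FreeGroup.mk (p ++ q)) = 1 ↔
      FreeGroup.lift f (FreeGroup.mk (q ++ p)) = 1 := by
  rw [← FreeGroup.mul_mk, ← FreeGroup.mul_mk, map_mul, map_mul, mul_eq_one_comm]

theorem exists_eq_append_cons_of_not_nodup {w : List (S × Bool)}
    (hw : ¬ (w.map Prod.fst).Nodup) :
    ∃ p g q x e e', w = p ++ (x, e) :: (g ++ (x, e') :: q) ∧ (x :: g.map Prod.fst).Nodup := by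
  induction w with
  | nil => simp at hw
  | cons a w ih =>
    obtain ⟨x, e⟩ := a
    by_cases hw' : (w.map Prod.fst).Nodup
    · have hx : x ∈ w.map Prod.fst := by
        by_contra hx
        exact hw (List.nodup_cons.mpr ⟨hx, hw'⟩)
      obtain ⟨⟨x, e'⟩, h_mem, rfl⟩ := List.mem_map.mp hx
      obtain ⟨g, q, rfl⟩ := List.append_of_mem h_mem
      rw [List.map_append, List.map_cons, List.nodup_middle, ← List.cons_append] at hw'
      exact ⟨[], g, q, x, e, e', rfl, hw'.of_append_left⟩
    · obtain ⟨p, g, q, y, d, d', rfl, h⟩ := ih hw'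
      exact ⟨(x, e) :: p, g, q, y, d, d', rfl, h⟩

end Words

section Dilation

variable {R V : Type*} [CommRing R] [AddCommGroup V] [Module R V]

/-- For `f e = 1`, the endomorphism of `V` that fixes `ker f` and multiplies `e` by `c`, as a
homomorphism in the ratio `c`. -/
def dilation (f : Module.Dual R V) (e : V) (hfe : f e = 1) : R →* Module.End R V where
  toFun c := 1 + (c - 1) • f.smulRight e
  map_one' := by simp
  map_mul' c d := by
    ext v
    simp only [LinearMap.add_apply, Module.End.one_apply, LinearMap.smul_apply,
      LinearMap.smulRight_apply, Module.End.mul_apply, map_add, map_smul, hfe]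
    module

variable {f : Module.Dual R V} {e : V} (hfe : f e = 1)

theorem dilation_apply (c : R) (v : V) : dilation f e hfe c v = v + ((c - 1) * f v) • e := by
  simp [dilation, mul_smul]

theorem dilation_apply_self (c : R) : dilation f e hfe c e = c • e := by
  rw [dilation_apply, hfe]; module

theorem dilation_mul_self (c : R) :
    dilation f e hfe c * dilation f e hfe c = (1 + c) • dilation f e hfe c - c • 1 := by
  ext v
  simp only [Module.End.mul_apply, LinearMap.sub_apply, LinearMap.smul_apply,
    Module.End.one_apply, dilation_apply, map_add, map_smul, hfe]
  module

end Dilation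

namespace ArtinGroup

variable {S : Type*} (M : CoxeterMatrix S)

open Classical in
/-- The coordinate functional of the reflection in `s` in the deformed geometric representation:
`1` on the basis vector of `s` and `-2r cos(π / M s t) / (1 + r²)` on that of `t ≠ s`. For
`M s t = 0`, which encodes `∞`, the convention `π / 0 = 0` gives the expected cosine `1`. -/
noncomputable def burauForm (r : ℝ) (s : S) : Module.Dual ℝ (S →₀ ℝ) :=
  Finsupp.linearCombination ℝ fun t ↦
    if t = s then 1 else -(2 * r * Real.cos (Real.pi / M s t) / (1 + r ^ 2))

variable {M} {s t : S}

theorem burauForm_single_self (r : ℝ) (s : S) : burauForm M r s (.single s 1) = 1 := by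
  simp [burauForm]

theorem burauForm_single_of_ne (r : ℝ) (hst : s ≠ t) :
    burauForm M r s (.single t 1) = -(2 * r * Real.cos (Real.pi / M s t) / (1 + r ^ 2)) := by
  simp [burauForm, hst.symm]

variable (M) in
/-- The unit of `End (S →₀ ℝ)` representing the generator `s` in the deformed geometric
representation, a Hecke algebra representation with parameter `q = r²`: it multiplies the basis
vector of `s` by `-r²`. -/
noncomputable def burauGen (r : ℝˣ) (s : S) : (Module.End ℝ (S →₀ ℝ))ˣ :=
  Units.map (dilation (burauForm M r s) (.single s 1) (burauForm_single_self (r : ℝ) s)) (-(r ^ 2))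

theorem burauGen_val (r : ℝˣ) (s : S) :
    (burauGen M r s : Module.End ℝ (S →₀ ℝ)) =
      dilation (burauForm M r s) (.single s 1) (burauForm_single_self (r : ℝ) s)
        (-(r : ℝ) ^ 2) := by
  simp [burauGen]

theorem burauGen_apply_self (r : ℝˣ) (s : S) :
    (burauGen M r s : Module.End ℝ (S →₀ ℝ)) (.single s 1) = -(r : ℝ) ^ 2 • .single s 1 := by
  rw [burauGen_val, dilation_apply_self]

theorem burauGen_apply_of_ne (r : ℝˣ) (hst : s ≠ t) :
    (burauGen M r s : Module.End ℝ (S →₀ ℝ)) (.single t 1) =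
      .single t 1 + (2 * r * Real.cos (Real.pi / M s t)) • .single s 1 := by
  have hr : 1 + (r : ℝ) ^ 2 ≠ 0 := by positivity
  rw [burauGen_val, dilation_apply, burauForm_single_of_ne _ hst]
  congr 2
  field_simp
  ring

theorem burauGen_mul_self (r : ℝˣ) (s : S) :
    (burauGen M r s * burauGen M r s : Module.End ℝ (S →₀ ℝ)) =
      (1 + -(r : ℝ) ^ 2) • (burauGen M r s : Module.End ℝ (S →₀ ℝ)) - (-(r : ℝ) ^ 2) • 1 := by
  rw [burauGen_val, dilation_mul_self]

theorem smul_single_sub_burauGen_sub_burauGen (r : ℝˣ) (hst : s ≠ t) :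
    (1 + -(r : ℝ) ^ 2) • .single t 1 - (burauGen M r s : Module.End ℝ (S →₀ ℝ)) (.single t 1)
        - (burauGen M r t : Module.End ℝ (S →₀ ℝ)) (.single t 1) =
      -(2 * r * Real.cos (Real.pi / M s t)) • .single s 1 := by
  rw [burauGen_apply_self, burauGen_apply_of_ne r hst]
  module

/-- The recurrence for the braid defect is diagonalized by the sum and the difference of the basis
vectors of `s` and `t`, which span the image of the initial value. -/
theorem braidDefect_burauGen_eq_zero (r : ℝˣ) (hst : s ≠ t) (hM : 2 ≤ M s t) :
    (braidDefect (burauGen M r) s t (M s t) : Module.End ℝ (S →₀ ℝ)) = 0 := by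
  refine LinearMap.ext fun z ↦ ?_
  set θ : ℝ := Real.pi / M s t with hθ
  set H : Module.End ℝ (S →₀ ℝ) := (1 + -(r : ℝ) ^ 2) • 1 - burauGen M r s - burauGen M r t
  set d : ℕ → S →₀ ℝ := fun n ↦ (braidDefect (burauGen M r) s t n : Module.End ℝ (S →₀ ℝ)) z
  set eₛ : S →₀ ℝ := .single s 1
  set eₜ : S →₀ ℝ := .single t 1
  have hHt : H eₜ = -(2 * r * Real.cos θ) • eₛ :=
    smul_single_sub_burauGen_sub_burauGen r hst
  have hHs : H eₛ = -(2 * r * Real.cos θ) • eₜ := by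
    rw [hθ, ← M.symmetric t s, ← smul_single_sub_burauGen_sub_burauGen r hst.symm, sub_right_comm]
    rfl
  set α : ℝ := (1 + (r : ℝ) ^ 2) * burauForm M r s z
  set β : ℝ := (1 + (r : ℝ) ^ 2) * burauForm M r t z
  have h_one : d 1 = ((β + α) / 2) • (eₜ - eₛ) + ((β - α) / 2) • (eₜ + eₛ) := by
    simp only [d, braidDefect_one, LinearMap.sub_apply, burauGen_val, dilation_apply]
    module
  have h_rec (n : ℕ) : d (n + 2) = H (d (n + 1)) - (r : ℝ) ^ 2 • d n := by
    simp only [d, H]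
    rw [braidDefect_add_two (R := Module.End ℝ (S →₀ ℝ)) (burauGen_mul_self r),
      LinearMap.add_apply, Module.End.mul_apply, LinearMap.smul_apply, neg_smul, ← sub_eq_add_neg]
  have h_sin : (r * Real.sin θ) • d (M s t) = Real.sin (M s t * θ) • _ :=
    sin_smul_eq_of_recurrence (by rw [map_smul, map_sub, hHs, hHt]; module)
      (by rw [map_smul, map_add, hHs, hHt]; module) (by simp [d, braidDefect_zero]) h_one h_rec _
  have hθπ : M s t * θ = Real.pi := mul_div_cancel₀ _ (by positivity)
  rw [hθπ, Real.sin_pi, zero_smul, smul_eq_zero] at h_sin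
  exact h_sin.resolve_left (mul_ne_zero r.ne_zero (sin_pi_div_ne_zero hM))

variable (M) in
/-- The deformed geometric representation of the Artin group, which generalizes the reduced Burau
representation of braid groups. -/
noncomputable def burauRep (r : ℝˣ) : ArtinGroup M →* (Module.End ℝ (S →₀ ℝ))ˣ :=
  PresentedGroup.toGroup (f := burauGen M r) <| by
    rintro _ ⟨s, t, hst, hM, rfl⟩
    rw [map_mul, map_inv, mul_inv_eq_one]
    exact Units.ext (sub_eq_zero.mp (braidDefect_burauGen_eq_zero r hst hM))

theorem burauRep_comp_lift (r : ℝˣ) :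
    (burauRep M r).comp (FreeGroup.lift (artinGen M)) = FreeGroup.lift (burauGen M r) := by
  ext1 s
  simp [artinGen, burauRep]

theorem cos_pi_div_pos (hst : s ≠ t) (hM : M s t ≠ 2) : 0 < Real.cos (Real.pi / M s t) := by
  rcases Nat.eq_zero_or_pos (M s t) with h_zero | h_pos
  · simp [h_zero]
  have h_two_lt : 2 < M s t := by have := M.off_diagonal s t hst; omega
  have hπ : 0 ≤ Real.pi / M s t := by positivity
  refine Real.cos_pos_of_mem_Ioo ⟨by linarith [Real.pi_pos], ?_⟩
  exact div_lt_div_of_pos_left Real.pi_pos two_pos (by exact_mod_cast h_two_lt)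

theorem burauForm_single_neg {r : ℝ} (hr : 0 < r) (hst : s ≠ t) (hM : M s t ≠ 2) :
    burauForm M r s (.single t 1) < 0 := by
  have := cos_pi_div_pos hst hM
  rw [burauForm_single_of_ne r hst, neg_lt_zero]
  positivity

theorem burauForm_eq_add_erase (r : ℝ) (s t : S) (v : S →₀ ℝ) :
    burauForm M r s v = v t * burauForm M r s (.single t 1) + burauForm M r s (v.erase t) := by
  rw [← smul_eq_mul, ← map_smul, ← map_add, Finsupp.smul_single, smul_eq_mul, mul_one,
    Finsupp.single_add_erase]

section Positivity

variable (hM : ∀ s t, s ≠ t → M s t ≠ 2)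
include hM

theorem burauForm_le_apply {r : ℝ} (hr : 0 < r) (s : S) {v : S →₀ ℝ} (hv : 0 ≤ v) :
    burauForm M r s v ≤ v s := by
  rw [burauForm_eq_add_erase r s s, burauForm_single_self, mul_one, add_le_iff_nonpos_right]
  conv_lhs => rw [← Finsupp.sum_single (v.erase s), map_finsuppSum]
  refine Finset.sum_nonpos fun t ht ↦ ?_
  have hts : t ≠ s := by rintro rfl; simp at ht
  beta_reduce
  rw [Finsupp.erase_ne hts, ← mul_one (v t), ← smul_eq_mul, ← Finsupp.smul_single, map_smul]
  exact smul_nonpos_of_nonneg_of_nonpos (hv t)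
    (burauForm_single_neg hr hts.symm (hM _ _ hts.symm)).le

theorem burauForm_lt_apply {r : ℝ} (hr : 0 < r) (hst : s ≠ t) {v : S →₀ ℝ} (hv : 0 ≤ v)
    (hvt : 0 < v t) : burauForm M r s v < v s := by
  have h_erase : 0 ≤ v.erase t := fun x ↦ by
    rcases eq_or_ne x t with rfl | hx
    · simp
    · simpa [Finsupp.erase_ne hx] using hv x
  calc burauForm M r s v
      = v t * burauForm M r s (.single t 1) + burauForm M r s (v.erase t) :=
        burauForm_eq_add_erase r s t v
    _ < burauForm M r s (v.erase t) :=
        add_lt_of_neg_left _ (mul_neg_of_pos_of_neg hvt (burauForm_single_neg hr hst (hM s t hst)))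
    _ ≤ (v.erase t) s := burauForm_le_apply hM hr s h_erase
    _ = v s := Finsupp.erase_ne hst

end Positivity

/-- The ratio `(-r²)^{±1}` by which a letter `s^{±1}` multiplies the basis vector of `s`. -/
noncomputable def letterRatio (r : ℝˣ) (e : Bool) : ℝˣ :=
  cond e (-(r ^ 2)) (-(r ^ 2))⁻¹

theorem letterRatio_neg (r : ℝˣ) (e : Bool) : (letterRatio r e : ℝ) < 0 := by
  have hr : 0 < (r : ℝ) ^ 2 := by have := r.ne_zero; positivity
  cases e <;> simpa [letterRatio, ← Units.val_pow_eq_pow_val] using hr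

variable (M) in
/-- The action of a word in the generators and their inverses in the deformed geometric
representation. -/
noncomputable def wordAction (r : ℝˣ) (w : List (S × Bool)) : Module.End ℝ (S →₀ ℝ) :=
  ((FreeGroup.lift (burauGen M r) (FreeGroup.mk w) : (Module.End ℝ (S →₀ ℝ))ˣ) :
    Module.End ℝ (S →₀ ℝ))

theorem wordAction_nil (r : ℝˣ) : wordAction M r [] = 1 := by
  simp [wordAction]

theorem wordAction_append_apply (r : ℝˣ) (w w' : List (S × Bool)) (v : S →₀ ℝ) :
    wordAction M r (w ++ w') v = wordAction M r w (wordAction M r w' v) := by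
  simp [wordAction]

theorem wordAction_cons_apply (r : ℝˣ) (a : S × Bool) (w : List (S × Bool)) (v : S →₀ ℝ) :
    wordAction M r (a :: w) v =
      wordAction M r w v +
        ((letterRatio r a.2 - 1) * burauForm M r a.1 (wordAction M r w v)) • .single a.1 1 := by
  obtain ⟨s, e⟩ := a
  cases e
  all_goals
    simp [wordAction, letterRatio, burauGen, ← map_inv, dilation_apply]

theorem wordAction_eq_one {r : ℝˣ} {w : List (S × Bool)}
    (hw : FreeGroup.lift (artinGen M) (FreeGroup.mk w) = 1) : wordAction M r w = 1 := by
  rw [wordAction, ← burauRep_comp_lift, MonoidHom.comp_apply, hw, map_one, Units.val_one]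

theorem wordAction_apply_of_notMem (r : ℝˣ) {x : S} {w : List (S × Bool)}
    (hx : x ∉ w.map Prod.fst) (v : S →₀ ℝ) : wordAction M r w v x = v x := by
  induction w with
  | nil => simp [wordAction_nil]
  | cons a w ih =>
    obtain ⟨hxa, hxw⟩ : x ≠ a.1 ∧ x ∉ w.map Prod.fst := by simpa using hx
    rw [wordAction_cons_apply, Finsupp.add_apply, Finsupp.smul_apply,
      Finsupp.single_eq_of_ne hxa, smul_zero, add_zero, ih hxw]

theorem wordAction_singleton_apply_single (r : ℝˣ) (x : S) (e : Bool) :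
    wordAction M r [(x, e)] (.single x 1) = (letterRatio r e : ℝ) • .single x 1 := by
  rw [wordAction_cons_apply, wordAction_nil, Module.End.one_apply, burauForm_single_self]
  module

/-- Rotating the unique occurrence of `x` to the end, the word multiplies the `x`-coordinate of the
basis vector of `x` by a negative number. -/
theorem lift_artinGen_ne_one_of_notMem {x : S} {e : Bool} {p q : List (S × Bool)}
    (hp : x ∉ p.map Prod.fst) (hq : x ∉ q.map Prod.fst) :
    FreeGroup.lift (artinGen M) (FreeGroup.mk (p ++ (x, e) :: q)) ≠ 1 := by
  intro h_one
  rw [List.append_cons, lift_mk_append_eq_one_comm, ← List.append_assoc] at h_one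
  have h_act := wordAction_eq_one (r := 1) h_one
  have h_coord : wordAction M 1 (q ++ p ++ [(x, e)]) (.single x 1) x = letterRatio 1 e := by
    rw [wordAction_append_apply, wordAction_apply_of_notMem _ (by simp_all),
      wordAction_singleton_apply_single]
    simp
  have h_neg := letterRatio_neg 1 e
  rw [← h_coord, h_act] at h_neg
  norm_num at h_neg

section TrivialWords

variable (hM : ∀ s t, s ≠ t → M s t ≠ 2)
include hM

theorem wordAction_single_pos {r : ℝˣ} (hr : 0 < (r : ℝ)) {x : S} {w : List (S × Bool)}
    (hw : (w.map Prod.fst).Nodup) (hx : x ∉ w.map Prod.fst) :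
    0 ≤ wordAction M r w (.single x 1) ∧
      ∀ y ∈ w.map Prod.fst, 0 < wordAction M r w (.single x 1) y := by
  induction w with
  | nil => simp [wordAction_nil]
  | cons a w ih =>
    obtain ⟨hxa, hxw⟩ : x ≠ a.1 ∧ x ∉ w.map Prod.fst := by simpa using hx
    rw [List.map_cons, List.nodup_cons] at hw
    obtain ⟨h_nonneg, h_pos⟩ := ih hw.2 hxw
    set u := wordAction M r w (.single x 1) with hu
    have hua : u a.1 = 0 := by
      rw [hu, wordAction_apply_of_notMem r hw.1, Finsupp.single_eq_of_ne hxa.symm]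
    have hux : 0 < u x := by
      rw [hu, wordAction_apply_of_notMem r hxw, Finsupp.single_eq_same]; exact one_pos
    have h_form : burauForm M r a.1 u < 0 := hua ▸ burauForm_lt_apply hM hr hxa.symm h_nonneg hux
    have h_coeff : 0 < (letterRatio r a.2 - 1) * burauForm M r a.1 u :=
      mul_pos_of_neg_of_neg (by linarith [letterRatio_neg r a.2]) h_form
    rw [wordAction_cons_apply, ← hu]
    refine ⟨add_nonneg h_nonneg (smul_nonneg h_coeff.le (by simp)), fun y hy ↦ ?_⟩
    rcases eq_or_ne y a.1 with rfl | hya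
    · simpa [hua] using h_coeff
    · simpa [Finsupp.single_eq_of_ne hya] using h_pos y (by simpa [hya] using hy)

theorem one_le_letterRatio_mul {r : ℝˣ} (hr : 0 < (r : ℝ)) {x : S} {e e' : Bool}
    {p g : List (S × Bool)} (hxp : x ∉ p.map Prod.fst) (hxg : x ∉ g.map Prod.fst)
    (hg : (g.map Prod.fst).Nodup) (h_one : wordAction M r (p ++ (x, e) :: (g ++ [(x, e')])) = 1) :
    (1 : ℝ) ≤ letterRatio r e * letterRatio r e' ∧
      (g ≠ [] → (1 : ℝ) < letterRatio r e * letterRatio r e') := by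
  set u := wordAction M r g (.single x 1) with hu
  have hux : u x = 1 := by
    rw [hu, wordAction_apply_of_notMem r hxg, Finsupp.single_eq_same]
  have h_coord : letterRatio r e' * (1 + (letterRatio r e - 1) * burauForm M r x u) = 1 := by
    have h := DFunLike.congr_fun (LinearMap.congr_fun h_one (.single x 1)) x
    rw [wordAction_append_apply, wordAction_apply_of_notMem r hxp, wordAction_cons_apply,
      wordAction_append_apply, wordAction_singleton_apply_single, map_smul, map_smul, ← hu] at h
    simp only [Finsupp.add_apply, Finsupp.smul_apply, hux, Finsupp.single_eq_same, smul_eq_mul,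
      Module.End.one_apply] at h
    linarith
  have h_pos : (0 : ℝ) < letterRatio r e' * (letterRatio r e - 1) :=
    mul_pos_of_neg_of_neg (letterRatio_neg r e') (by linarith [letterRatio_neg r e])
  obtain ⟨hu_nonneg, hu_pos⟩ := wordAction_single_pos hM hr hg hxg
  refine ⟨?_, fun hg_ne ↦ ?_⟩
  · have h_le : burauForm M r x u ≤ 1 := hux ▸ burauForm_le_apply hM hr x hu_nonneg
    linarith [mul_nonneg h_pos.le (sub_nonneg.mpr h_le)]
  · obtain ⟨a, ha⟩ := List.exists_mem_of_ne_nil g hg_ne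
    have hag : a.1 ∈ g.map Prod.fst := List.mem_map_of_mem ha
    have h_lt : burauForm M r x u < 1 :=
      hux ▸ burauForm_lt_apply hM hr (ne_of_mem_of_not_mem hag hxg).symm hu_nonneg (hu_pos _ hag)
    linarith [mul_pos h_pos (sub_pos.mpr h_lt)]

/-- The product of the two ratios is `r ^ 4`, `1` or `r ^ (-4)`. Being at least `1` both for `r = 2`
and for `r = 1 / 2`, it equals `1`, which in turn contradicts the strict inequality for `g ≠ []`. -/
theorem eq_not_and_eq_nil_of_lift_artinGen_eq_one {x : S} {e e' : Bool}
    {p g q : List (S × Bool)} (hxp : x ∉ p.map Prod.fst) (hxg : x ∉ g.map Prod.fst)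
    (hxq : x ∉ q.map Prod.fst) (hg : (g.map Prod.fst).Nodup)
    (h_one : FreeGroup.lift (artinGen M) (FreeGroup.mk (p ++ (x, e) :: (g ++ (x, e') :: q))) = 1) :
    e' = !e ∧ g = [] := by
  rw [List.append_cons _ _ q, ← List.cons_append, ← List.append_assoc, lift_mk_append_eq_one_comm,
    ← List.append_assoc] at h_one
  have key {r : ℝˣ} (hr : 0 < (r : ℝ)) :=
    one_le_letterRatio_mul hM hr (by simp_all) hxg hg (wordAction_eq_one (r := r) h_one)
  have h := And.intro (key (r := Units.mk0 2 two_ne_zero) two_pos)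
    (key (r := Units.mk0 2⁻¹ (by norm_num)) (by norm_num))
  cases e <;> cases e' <;> norm_num [letterRatio] at h <;> exact ⟨rfl, h⟩

/-- Two occurrences of a generator that enclose a word without repetitions must be adjacent and
opposite, so the word gets shorter by a free cancellation. -/
theorem mk_eq_one_of_lift_artinGen_eq_one [DecidableEq S] {w : List (S × Bool)}
    (h_count : ∀ x, (w.map Prod.fst).count x ≤ 2)
    (h_one : FreeGroup.lift (artinGen M) (FreeGroup.mk w) = 1) : FreeGroup.mk w = 1 := by
  induction h_len : w.length using Nat.strong_induction_on generalizing w with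
  | h n ih =>
  subst h_len
  rcases w with _ | ⟨a, w⟩
  · exact FreeGroup.one_eq_mk.symm
  have h_dup : ¬ ((a :: w).map Prod.fst).Nodup := fun h ↦
    lift_artinGen_ne_one_of_notMem (p := []) (by simp) (List.nodup_cons.mp h).1 h_one
  obtain ⟨p, g, q, x, e, e', h_eq, hg⟩ := exists_eq_append_cons_of_not_nodup h_dup
  have h_count_x := h_count x
  rw [h_eq] at h_one h_count h_count_x ih ⊢
  simp only [List.map_append, List.map_cons, List.count_append, List.count_cons_self] at h_count_x
  obtain ⟨hxg, hg⟩ := List.nodup_cons.mp hg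
  obtain ⟨rfl, rfl⟩ := eq_not_and_eq_nil_of_lift_artinGen_eq_one hM
    (List.count_eq_zero.mp (by omega)) hxg (List.count_eq_zero.mp (by omega)) hg h_one
  have h_cancel : FreeGroup.mk (p ++ (x, e) :: ([] ++ (x, !e) :: q)) = FreeGroup.mk (p ++ q) :=
    Quot.sound FreeGroup.Red.Step.not
  rw [h_cancel] at h_one ⊢
  refine ih _ (by simp) (fun y ↦ (List.Sublist.count_le _ ?_).trans (h_count y)) h_one rfl
  exact (List.Sublist.append_left (by simp) p).map Prod.fst

theorem mk_eq_one_or_two_mul_card_lt [DecidableEq S] {w : List (S × Bool)}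
    (h_one : FreeGroup.lift (artinGen M) (FreeGroup.mk w) = 1) :
    FreeGroup.mk w = 1 ∨ 2 * (w.map Prod.fst).toFinset.card < w.length := by
  by_contra! h
  obtain ⟨h_ne, h_card⟩ := h
  have h_two_le : ∀ x ∈ (w.map Prod.fst).toFinset, 2 ≤ (w.map Prod.fst).count x := by
    intro x hx
    by_contra! h_lt
    obtain ⟨⟨x, e⟩, h_mem, rfl⟩ := List.mem_map.mp (List.mem_toFinset.mp hx)
    obtain ⟨p, q, rfl⟩ := List.append_of_mem h_mem
    simp only [List.map_append, List.map_cons, List.count_append, List.count_cons_self] at h_lt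
    exact lift_artinGen_ne_one_of_notMem (List.count_eq_zero.mp (by omega))
      (List.count_eq_zero.mp (by omega)) h_one
  have h_sum : ∑ x ∈ (w.map Prod.fst).toFinset, (w.map Prod.fst).count x = w.length := by
    rw [List.sum_toFinset_count_eq_length, List.length_map]
  refine h_ne (mk_eq_one_of_lift_artinGen_eq_one hM (fun x ↦ ?_) h_one)
  by_contra! h_gt
  have hx : x ∈ (w.map Prod.fst).toFinset :=
    List.mem_toFinset.mpr (List.count_pos_iff.mp (by omega))
  have h_lt : ∑ x ∈ (w.map Prod.fst).toFinset, 2 < w.length :=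
    h_sum ▸ Finset.sum_lt_sum h_two_le ⟨x, hx, h_gt⟩
  rw [Finset.sum_const, smul_eq_mul] at h_lt
  omega

end TrivialWords

end ArtinGroup

section FreeReduction

variable {X : Type*}

theorem exists_eq_append_cons_of_red_singleton {L : List (X × Bool)} {a : X × Bool}
    (h : FreeGroup.Red L [a]) :
    ∃ u v, L = u ++ a :: v ∧ FreeGroup.Red u [] ∧ FreeGroup.Red v [] := by
  induction h using Relation.ReflTransGen.head_induction_on with
  | refl => exact ⟨[], [], rfl, .refl, .refl⟩
  | head h_step _ ih =>
    obtain ⟨u, v, h_eq, hu, hv⟩ := ih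
    obtain @⟨L₁, L₂, x, b⟩ := h_step
    rcases List.append_eq_append_iff.mp h_eq with ⟨m, rfl, rfl⟩ | ⟨_ | ⟨_, m⟩, rfl, h_cons⟩
    · exact ⟨L₁ ++ (x, b) :: (x, !b) :: m, v, by simp, .head .not hu, hv⟩
    · obtain rfl : a :: v = L₂ := h_cons
      exact ⟨u ++ [(x, b), (x, !b)], v, by simp,
        .head (by simpa using FreeGroup.Red.Step.not (L₁ := u) (L₂ := [])) hu, hv⟩
    · obtain ⟨rfl, rfl⟩ := List.cons.inj h_cons
      exact ⟨u, m ++ (x, b) :: (x, !b) :: L₂, by simp, hu, .head .not hv⟩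

theorem mk_eq_one_iff_red_nil {L : List (X × Bool)} :
    FreeGroup.mk L = 1 ↔ FreeGroup.Red L [] := by
  rw [FreeGroup.one_eq_mk, FreeGroup.Red.exact]
  refine ⟨fun ⟨L', hL, h_nil⟩ ↦ ?_, fun h ↦ ⟨[], h, .refl⟩⟩
  rwa [FreeGroup.Red.nil_iff.mp h_nil] at hL

theorem even_length_of_mk_eq_one {L : List (X × Bool)} (h : FreeGroup.mk L = 1) :
    Even L.length := by
  obtain ⟨n, hn⟩ := (mk_eq_one_iff_red_nil.mp h).length
  simp [hn]

/-- The word `a u a⁻¹ v`. Freely trivial nonempty words are those of this form with `u` and `v`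
freely trivial, whence the Catalan recurrence. -/
def bracket (a : X × Bool) (u v : List (X × Bool)) : List (X × Bool) :=
  a :: (u ++ (a.1, !a.2) :: v)

theorem length_bracket (a : X × Bool) (u v : List (X × Bool)) :
    (bracket a u v).length = u.length + v.length + 2 := by
  simp only [bracket, List.length_cons, List.length_append]
  omega

theorem mk_bracket_eq_one (a : X × Bool) {u v : List (X × Bool)} (hu : FreeGroup.mk u = 1)
    (hv : FreeGroup.mk v = 1) : FreeGroup.mk (bracket a u v) = 1 := by
  obtain ⟨x, b⟩ := a
  calc FreeGroup.mk (bracket (x, b) u v)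
      = FreeGroup.mk [(x, b)] * FreeGroup.mk u * FreeGroup.mk [(x, !b)] * FreeGroup.mk v := by
        simp [bracket, FreeGroup.mul_mk]
    _ = FreeGroup.mk [(x, b), (x, !b)] := by simp [hu, hv, FreeGroup.mul_mk]
    _ = 1 := Quot.sound FreeGroup.Red.Step.cons_not

theorem exists_eq_bracket_of_mk_cons_eq_one {a : X × Bool} {L : List (X × Bool)}
    (h : FreeGroup.mk (a :: L) = 1) :
    ∃ u v, a :: L = bracket a u v ∧ FreeGroup.mk u = 1 ∧ FreeGroup.mk v = 1 := by
  obtain ⟨u, v, rfl, hu, hv⟩ := exists_eq_append_cons_of_red_singleton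
    (FreeGroup.Red.cons_nil_iff_singleton.mp (mk_eq_one_iff_red_nil.mp h))
  exact ⟨u, v, rfl, mk_eq_one_iff_red_nil.mpr hu, mk_eq_one_iff_red_nil.mpr hv⟩

theorem bracket_inj {a a' : X × Bool} {u v u' v' : List (X × Bool)}
    (hu : a.1 ∉ u.map Prod.fst) (hu' : a'.1 ∉ u'.map Prod.fst) :
    bracket a u v = bracket a' u' v' ↔ a = a' ∧ u = u' ∧ v = v' := by
  refine ⟨fun h ↦ ?_, by rintro ⟨rfl, rfl, rfl⟩; rfl⟩
  obtain ⟨rfl, h_tail⟩ := List.cons.inj h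
  rcases List.append_eq_append_iff.mp h_tail with ⟨_ | ⟨b, m⟩, rfl, h_eq⟩ | ⟨_ | ⟨b, m⟩, rfl, h_eq⟩
  · simpa using h_eq
  · simp [← (List.cons.inj h_eq).1] at hu'
  · simpa [eq_comm] using h_eq
  · simp [← (List.cons.inj h_eq).1] at hu

end FreeReduction

section WordCounts

open Finset

variable {X G : Type*} [Group G]

/-- The words of length `k` in the letters `x^{±1}` with `x ∈ F`. -/
def words (F : Finset X) (k : ℕ) : Finset (List (X × Bool)) :=
  (Fintype.piFinset fun _ : Fin k ↦ F ×ˢ univ).map ⟨List.ofFn, List.ofFn_injective⟩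

theorem mem_words {F : Finset X} {k : ℕ} {w : List (X × Bool)} :
    w ∈ words F k ↔ w.length = k ∧ ∀ x ∈ w.map Prod.fst, x ∈ F := by
  simp only [words, Finset.mem_map, Fintype.mem_piFinset, mem_product, mem_univ, and_true,
    Function.Embedding.coeFn_mk, List.forall_mem_map]
  constructor
  · rintro ⟨v, hv, rfl⟩
    exact ⟨List.length_ofFn, List.forall_mem_ofFn_iff.mpr hv⟩
  · rintro ⟨rfl, hw⟩
    exact ⟨w.get, fun i ↦ hw _ (w.get_mem i), List.ofFn_get w⟩

theorem card_words (F : Finset X) (k : ℕ) : #(words F k) = (2 * #F) ^ k := by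
  simp [words, mul_comm]

open Classical in
/-- The words of length `k` in the letters `x^{±1}` with `x ∈ F` that become trivial in `G` when
each generator `x` is replaced by `f x`. -/
noncomputable def trivialWords (f : X → G) (F : Finset X) (k : ℕ) : Finset (List (X × Bool)) :=
  {w ∈ words F k | FreeGroup.lift f (FreeGroup.mk w) = 1}

theorem mem_trivialWords {f : X → G} {F : Finset X} {k : ℕ} {w : List (X × Bool)} :
    w ∈ trivialWords f F k ↔ w ∈ words F k ∧ FreeGroup.lift f (FreeGroup.mk w) = 1 := by
  classical exact Finset.mem_filter

theorem length_eq_of_mem_trivialWords {f : X → G} {F : Finset X} {k : ℕ} {w : List (X × Bool)}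
    (hw : w ∈ trivialWords f F k) : w.length = k :=
  (mem_words.mp (mem_trivialWords.mp hw).1).1

theorem trivialWords_mono (f : X → G) {F F' : Finset X} (h : F ⊆ F') (k : ℕ) :
    trivialWords f F k ⊆ trivialWords f F' k := fun w hw ↦ by
  rw [mem_trivialWords, mem_words] at hw ⊢
  exact ⟨⟨hw.1.1, fun x hx ↦ h (hw.1.2 x hx)⟩, hw.2⟩

theorem mem_trivialWords_of {F : Finset X} {k : ℕ} {w : List (X × Bool)} :
    w ∈ trivialWords FreeGroup.of F k ↔ w ∈ words F k ∧ FreeGroup.mk w = 1 := by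
  rw [mem_trivialWords, FreeGroup.lift_of_eq_id, MonoidHom.id_apply]

theorem trivialWords_of_subset (f : X → G) (F : Finset X) (k : ℕ) :
    trivialWords FreeGroup.of F k ⊆ trivialWords f F k := fun w hw ↦ by
  rw [mem_trivialWords_of] at hw
  rw [mem_trivialWords, hw.2, map_one]
  exact ⟨hw.1, rfl⟩

theorem trivialWords_of_eq_empty (F : Finset X) {k : ℕ} (hk : ¬ Even k) :
    trivialWords FreeGroup.of F k = ∅ := by
  refine eq_empty_of_forall_notMem fun w hw ↦ hk ?_
  exact length_eq_of_mem_trivialWords hw ▸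
    even_length_of_mk_eq_one (mem_trivialWords_of.mp hw).2

theorem exists_eq_bracket_of_mem_trivialWords_of {F : Finset X} {n : ℕ} {w : List (X × Bool)}
    (hw : w ∈ trivialWords FreeGroup.of F (2 * (n + 1))) :
    ∃ a u v i j, w = bracket a u v ∧ i + j = n ∧ a.1 ∈ F ∧
      u ∈ trivialWords FreeGroup.of F (2 * i) ∧ v ∈ trivialWords FreeGroup.of F (2 * j) := by
  rw [mem_trivialWords_of, mem_words] at hw
  obtain ⟨⟨h_len, h_mem⟩, h_mk⟩ := hw
  obtain ⟨a, L, rfl⟩ := List.exists_cons_of_length_pos (l := w) (by omega)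
  obtain ⟨u, v, h_eq, hu, hv⟩ := exists_eq_bracket_of_mk_cons_eq_one h_mk
  rw [h_eq] at h_len h_mem ⊢
  rw [length_bracket] at h_len
  simp only [bracket, List.map_cons, List.map_append, List.forall_mem_cons,
    List.forall_mem_append] at h_mem
  obtain ⟨i, hi⟩ := even_length_of_mk_eq_one hu
  obtain ⟨j, hj⟩ := even_length_of_mk_eq_one hv
  refine ⟨a, u, v, i, j, rfl, by omega, h_mem.1, ?_, ?_⟩
  · exact mem_trivialWords_of.mpr ⟨mem_words.mpr ⟨by omega, h_mem.2.1⟩, hu⟩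
  · exact mem_trivialWords_of.mpr ⟨mem_words.mpr ⟨by omega, h_mem.2.2.2⟩, hv⟩

theorem bracket_mem_trivialWords_of {F : Finset X} {a : X × Bool} {u v : List (X × Bool)}
    {k l : ℕ} (ha : a.1 ∈ F) (hu : u ∈ trivialWords FreeGroup.of F k)
    (hv : v ∈ trivialWords FreeGroup.of F l) :
    bracket a u v ∈ trivialWords FreeGroup.of F (k + l + 2) := by
  rw [mem_trivialWords_of, mem_words] at *
  refine ⟨⟨by rw [length_bracket, hu.1.1, hv.1.1], ?_⟩, mk_bracket_eq_one a hu.2 hv.2⟩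
  simp only [bracket, List.map_cons, List.map_append, List.forall_mem_cons,
    List.forall_mem_append]
  exact ⟨ha, hu.1.2, ha, hv.1.2⟩

theorem card_trivialWords_of_le (F : Finset X) (n : ℕ) :
    #(trivialWords FreeGroup.of F (2 * n)) ≤ catalan n * (2 * #F) ^ n := by
  classical
  induction n using Nat.strong_induction_on with
  | h n ih =>
  rcases n with _ | n
  · exact (card_le_card fun w hw ↦ (mem_trivialWords.mp hw).1).trans (by simp [card_words])
  set T := trivialWords (FreeGroup.of (α := X)) F with hT
  set B : ℕ × ℕ → Finset (List (X × Bool)) := fun ij ↦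
    ((F ×ˢ univ) ×ˢ T (2 * ij.1) ×ˢ T (2 * ij.2)).image fun p ↦ bracket p.1 p.2.1 p.2.2
  have h_subset : T (2 * (n + 1)) ⊆ (antidiagonal n).biUnion B := fun w hw ↦ by
    obtain ⟨a, u, v, i, j, rfl, hij, ha, hu, hv⟩ := exists_eq_bracket_of_mem_trivialWords_of hw
    refine mem_biUnion.mpr ⟨(i, j), HasAntidiagonal.mem_antidiagonal.mpr hij,
      mem_image.mpr ⟨(a, u, v), ?_, rfl⟩⟩
    simp [ha, hu, hv, hT]
  have h_card (ij) (h_mem : ij ∈ antidiagonal n) :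
      #(B ij) ≤ catalan ij.1 * catalan ij.2 * (2 * #F) ^ (n + 1) := by
    rw [HasAntidiagonal.mem_antidiagonal] at h_mem
    calc #(B ij) ≤ #F * 2 * (#(T (2 * ij.1)) * #(T (2 * ij.2))) :=
          card_image_le.trans_eq (by simp only [card_product, card_univ, Fintype.card_bool])
      _ ≤ #F * 2 * ((catalan ij.1 * (2 * #F) ^ ij.1) * (catalan ij.2 * (2 * #F) ^ ij.2)) := by
          gcongr <;> exact ih _ (by omega)
      _ = catalan ij.1 * catalan ij.2 * (2 * #F) ^ (n + 1) := by rw [← h_mem]; ring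
  calc #(T (2 * (n + 1)))
      ≤ ∑ ij ∈ antidiagonal n, catalan ij.1 * catalan ij.2 * (2 * #F) ^ (n + 1) :=
        (card_le_card h_subset).trans (card_biUnion_le.trans (sum_le_sum h_card))
    _ = catalan (n + 1) * (2 * #F) ^ (n + 1) := by rw [catalan_succ', sum_mul]

/-- Among the brackets `a u a⁻¹ v`, those whose `u` avoids the generator of `a` determine
`(a, u, v)`. -/
theorem sum_card_trivialWords_of_le [DecidableEq X] (F : Finset X) (n : ℕ) :
    ∑ ij ∈ antidiagonal n, ∑ a ∈ F ×ˢ (univ : Finset Bool),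
        #(trivialWords FreeGroup.of (F.erase a.1) (2 * ij.1)) *
          #(trivialWords FreeGroup.of F (2 * ij.2)) ≤
      #(trivialWords FreeGroup.of F (2 * (n + 1))) := by
  have h_notMem {a : X × Bool} {u : List (X × Bool)} {k : ℕ}
      (hu : u ∈ trivialWords FreeGroup.of (F.erase a.1) k) : a.1 ∉ u.map Prod.fst := fun ha ↦
    notMem_erase a.1 F ((mem_words.mp (mem_trivialWords_of.mp hu).1).2 _ ha)
  simp only [← card_product, ← card_sigma]
  refine card_le_card_of_injOn (fun p ↦ bracket p.2.1 p.2.2.1 p.2.2.2) ?_ ?_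
  · rintro ⟨⟨i, j⟩, a, u, v⟩ hp
    simp only [coe_sigma, Set.mem_sigma_iff, mem_coe, HasAntidiagonal.mem_antidiagonal,
      mem_product, mem_univ, and_true] at hp
    obtain ⟨rfl, ha, hu, hv⟩ := hp
    have := bracket_mem_trivialWords_of ha (trivialWords_mono _ (erase_subset _ _) _ hu) hv
    rwa [show 2 * i + 2 * j + 2 = 2 * (i + j + 1) by ring] at this
  · rintro ⟨⟨i, j⟩, a, u, v⟩ hp ⟨⟨i', j'⟩, a', u', v'⟩ hp' h_eq
    simp only [coe_sigma, Set.mem_sigma_iff, mem_coe, HasAntidiagonal.mem_antidiagonal,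
      mem_product, mem_univ, and_true] at hp hp'
    obtain ⟨rfl, rfl, rfl⟩ := (bracket_inj (h_notMem hp.2.2.1) (h_notMem hp'.2.2.1)).mp h_eq
    have h_len := length_eq_of_mem_trivialWords hp.2.2.1
    have h_len' := length_eq_of_mem_trivialWords hp'.2.2.1
    obtain rfl : i = i' := by omega
    obtain rfl : j = j' := by omega
    rfl

theorem le_card_trivialWords_of {F : Finset X} {m n : ℕ} (h : m + n ≤ #F) :
    catalan n * (2 * m) ^ n ≤ #(trivialWords FreeGroup.of F (2 * n)) := by
  classical
  induction n using Nat.strong_induction_on generalizing F with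
  | h n ih =>
  rcases n with _ | n
  · have : [] ∈ trivialWords FreeGroup.of F 0 :=
      mem_trivialWords_of.mpr ⟨mem_words.mpr (by simp), FreeGroup.one_eq_mk.symm⟩
    simpa using card_pos.mpr ⟨_, this⟩
  refine le_trans ?_ (sum_card_trivialWords_of_le F n)
  rw [catalan_succ', sum_mul]
  refine sum_le_sum fun ij h_mem ↦ ?_
  rw [HasAntidiagonal.mem_antidiagonal] at h_mem
  calc catalan ij.1 * catalan ij.2 * (2 * m) ^ (n + 1)
      = m * 2 * ((catalan ij.1 * (2 * m) ^ ij.1) * (catalan ij.2 * (2 * m) ^ ij.2)) := by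
        rw [← h_mem]; ring
    _ ≤ #F * 2 * ((catalan ij.1 * (2 * m) ^ ij.1) * (catalan ij.2 * (2 * m) ^ ij.2)) := by
        gcongr; omega
    _ = ∑ a ∈ F ×ˢ (univ : Finset Bool),
          (catalan ij.1 * (2 * m) ^ ij.1) * (catalan ij.2 * (2 * m) ^ ij.2) := by simp
    _ ≤ _ := by
        refine sum_le_sum fun a ha ↦
          Nat.mul_le_mul (ih _ (by omega) ?_) (ih _ (by omega) (by omega))
        rw [card_erase_of_mem (mem_product.mp ha).1]
        omega

variable [DecidableEq X]

theorem card_filter_card_le_le {F : Finset X} {d : ℕ} (hd : d ≤ #F) (k : ℕ) :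
    #{w ∈ words F k | #(w.map Prod.fst).toFinset ≤ d} ≤ #F ^ d * (2 * d) ^ k := by
  have h_subset : {w ∈ words F k | #(w.map Prod.fst).toFinset ≤ d} ⊆
      (F.powersetCard d).biUnion (words · k) := fun w hw ↦ by
    obtain ⟨hw, h_card⟩ := Finset.mem_filter.mp hw
    rw [mem_words] at hw
    obtain ⟨D, hwD, hDF, hD⟩ := exists_subsuperset_card_eq
      (fun x hx ↦ hw.2 x (List.mem_toFinset.mp hx)) h_card hd
    exact mem_biUnion.mpr ⟨D, mem_powersetCard.mpr ⟨hDF, hD⟩,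
      mem_words.mpr ⟨hw.1, fun x hx ↦ hwD (List.mem_toFinset.mpr hx)⟩⟩
  calc #{w ∈ words F k | #(w.map Prod.fst).toFinset ≤ d}
      ≤ #(F.powersetCard d) * (2 * d) ^ k :=
        (card_le_card h_subset).trans <| card_biUnion_le_card_mul _ _ _ fun D hD ↦ by
          rw [card_words, (mem_powersetCard.mp hD).2]
    _ ≤ #F ^ d * (2 * d) ^ k := by
        rw [card_powersetCard]
        gcongr
        exact Nat.choose_le_pow _ _

theorem card_trivialWords_le_add {f : X → G}
    (hf : ∀ w, FreeGroup.lift f (FreeGroup.mk w) = 1 →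
      FreeGroup.mk w = 1 ∨ 2 * #(w.map Prod.fst).toFinset < w.length) (F : Finset X) (k : ℕ) :
    #(trivialWords f F k) ≤ #(trivialWords FreeGroup.of F k) +
      #{w ∈ words F k | 2 * #(w.map Prod.fst).toFinset < k} := by
  refine (card_le_card fun w hw ↦ ?_).trans (card_union_le _ _)
  rw [mem_trivialWords] at hw
  refine mem_union.mpr ((hf w hw.2).imp (fun h ↦ mem_trivialWords_of.mpr ⟨hw.1, h⟩) fun h ↦ ?_)
  exact Finset.mem_filter.mpr ⟨hw.1, (mem_words.mp hw.1).1 ▸ h⟩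

end WordCounts

section Asymptotics

open Finset

variable {X : Type*} {F : ℕ → Finset X} (hF : ∀ N, #(F N) = N)

theorem tendsto_sqrt_two_mul_atTop : Tendsto (fun N : ℕ ↦ √(2 * N : ℝ)) atTop atTop :=
  Real.tendsto_sqrt_atTop.comp (tendsto_natCast_atTop_atTop.const_mul_atTop two_pos)

include hF

theorem tendsto_card_filter_two_mul_card_lt_div [DecidableEq X] (k : ℕ) :
    Tendsto (fun N ↦ (#{w ∈ words (F N) k | 2 * #(w.map Prod.fst).toFinset < k} : ℝ) /
      √(2 * N) ^ k) atTop (𝓝 0) := by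
  rcases Nat.eq_zero_or_pos k with rfl | hk
  · simp
  obtain ⟨d, hd, hdk⟩ : ∃ d, (∀ c, 2 * c < k → c ≤ d) ∧ 2 * d < k :=
    ⟨(k - 1) / 2, by omega, by omega⟩
  have h_lim : Tendsto (fun N : ℕ ↦ (2 * d : ℝ) ^ k * (√(2 * N) ^ (2 * d) / √(2 * N) ^ k)) atTop
      (𝓝 0) := by
    simpa using ((tendsto_pow_div_pow_atTop_zero hdk).comp tendsto_sqrt_two_mul_atTop).const_mul
      ((2 * d : ℝ) ^ k)
  refine squeeze_zero' (.of_forall fun N ↦ by positivity) ?_ h_lim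
  filter_upwards [eventually_ge_atTop d] with N hN
  have h_card : #{w ∈ words (F N) k | 2 * #(w.map Prod.fst).toFinset < k} ≤
      N ^ d * (2 * d) ^ k := by
    have := card_filter_card_le_le (hN.trans_eq (hF N).symm) k
    rw [hF] at this
    exact (card_le_card (monotone_filter_right _ fun w _ ↦ hd _)).trans this
  rw [← mul_div_assoc]
  gcongr
  calc (#{w ∈ words (F N) k | 2 * #(w.map Prod.fst).toFinset < k} : ℝ)
      ≤ (2 * d) ^ k * N ^ d := by rw [mul_comm]; exact_mod_cast h_card
    _ ≤ (2 * d) ^ k * √(2 * N) ^ (2 * d) := by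
        rw [pow_mul √_, Real.sq_sqrt (by positivity)]
        gcongr
        linarith [N.cast_nonneg (α := ℝ)]

theorem tendsto_card_trivialWords_of_div (k : ℕ) :
    Tendsto (fun N ↦ (#(trivialWords FreeGroup.of (F N) k) : ℝ) / √(2 * N) ^ k) atTop
      (𝓝 (if Even k then (catalan (k / 2) : ℝ) else 0)) := by
  by_cases hk : Even k
  swap
  · simp [hk, trivialWords_of_eq_empty]
  obtain ⟨n, rfl⟩ := hk.two_dvd
  rw [if_pos hk, Nat.mul_div_cancel_left n two_pos]
  have h_sqrt (N : ℕ) : √(2 * N : ℝ) ^ (2 * n) = (2 * N) ^ n := by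
    rw [pow_mul, Real.sq_sqrt (by positivity)]
  have h_lim : Tendsto (fun N : ℕ ↦ catalan n * (1 - n / N : ℝ) ^ n) atTop (𝓝 (catalan n)) := by
    simpa using (((tendsto_const_div_atTop_nhds_zero_nat (n : ℝ)).const_sub 1).pow n).const_mul
      (catalan n : ℝ)
  refine tendsto_of_tendsto_of_tendsto_of_le_of_le' h_lim tendsto_const_nhds ?_ ?_
  all_goals
    filter_upwards [eventually_gt_atTop n] with N hN
    have hN_pos : (0 : ℝ) < N := by exact_mod_cast n.zero_le.trans_lt hN
    rw [h_sqrt]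
  · have h_le := le_card_trivialWords_of (F := F N) (m := N - n) (n := n) (by rw [hF]; omega)
    rw [le_div_iff₀ (by positivity), mul_assoc, ← mul_pow]
    calc catalan n * ((1 - n / N : ℝ) * (2 * N)) ^ n = catalan n * (2 * (N - n : ℕ)) ^ n := by
          rw [Nat.cast_sub hN.le]
          field_simp
      _ ≤ #(trivialWords FreeGroup.of (F N) (2 * n)) := by exact_mod_cast h_le
  · have h_le := card_trivialWords_of_le (F N) n
    rw [hF] at h_le
    rw [div_le_iff₀ (by positivity)]
    exact_mod_cast h_le

theorem tendsto_card_trivialWords_div [DecidableEq X] {G : Type*} [Group G] {f : X → G}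
    (hf : ∀ w, FreeGroup.lift f (FreeGroup.mk w) = 1 →
      FreeGroup.mk w = 1 ∨ 2 * #(w.map Prod.fst).toFinset < w.length) (k : ℕ) :
    Tendsto (fun N ↦ (#(trivialWords f (F N) k) : ℝ) / √(2 * N) ^ k) atTop
      (𝓝 (if Even k then (catalan (k / 2) : ℝ) else 0)) := by
  have h_upper := (tendsto_card_trivialWords_of_div hF k).add
    (tendsto_card_filter_two_mul_card_lt_div hF k)
  rw [add_zero] at h_upper
  refine tendsto_of_tendsto_of_tendsto_of_le_of_le (tendsto_card_trivialWords_of_div hF k) h_upper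
    (fun N ↦ ?_) fun N ↦ ?_
  · dsimp only
    gcongr
    exact trivialWords_of_subset f (F N) k
  · dsimp only
    rw [← add_div]
    gcongr
    exact_mod_cast card_trivialWords_le_add hf (F N) k

end Asymptotics

open Finset in
theorem natCard_prod_eq_one_eq_card_trivialWords {X G ι : Type*} [Group G] [Fintype ι] (t : ι ↪ X)
    (f : X → G) (k : ℕ) :
    Nat.card {w : Fin k → ι × Bool //
      (List.ofFn fun j ↦ if (w j).2 then f (t (w j).1) else (f (t (w j).1))⁻¹).prod = 1} =
      #(trivialWords f (univ.map t) k) := by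
  classical
  rw [Nat.card_eq_fintype_card, Fintype.card_subtype]
  have h_lift (w : Fin k → ι × Bool) : FreeGroup.lift f
      (FreeGroup.mk (List.ofFn fun j ↦ (t (w j).1, (w j).2))) =
      (List.ofFn fun j ↦ if (w j).2 then f (t (w j).1) else (f (t (w j).1))⁻¹).prod := by
    simp [FreeGroup.lift_mk, List.map_ofFn, Function.comp_def, Bool.cond_eq_ite]
  refine card_bij (fun w _ ↦ List.ofFn fun j ↦ (t (w j).1, (w j).2)) (fun w hw ↦ ?_) ?_ ?_
  · rw [mem_trivialWords, h_lift, mem_words]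
    exact ⟨⟨List.length_ofFn, by simp⟩, (Finset.mem_filter.mp hw).2⟩
  · intro w _ w' _ h_eq
    ext j : 1
    have := congr_fun (List.ofFn_injective h_eq) j
    simpa [Prod.ext_iff] using this
  · intro L hL
    rw [mem_trivialWords, mem_words] at hL
    obtain ⟨⟨rfl, h_letter⟩, h_one⟩ := hL
    have h_range (j) : ∃ i, t i = (L.get j).1 := by
      simpa using h_letter _ (List.mem_map_of_mem (L.get_mem j))
    choose i hi using h_range
    have h_word : (List.ofFn fun j ↦ (t (i j), (L.get j).2)) = L := by
      simp only [hi, Prod.mk.eta, List.ofFn_get]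
    refine ⟨fun j ↦ (i j, (L.get j).2), Finset.mem_filter.mpr ⟨mem_univ _, ?_⟩, h_word⟩
    rw [← h_lift, h_word, h_one]

theorem artin_clt_general {S : Type*} (M : CoxeterMatrix S) (hM : ∀ s t : S, s ≠ t → M s t ≠ 2)
    (s : ℕ → S) (hs : Function.Injective s) (k : ℕ) :
    Tendsto
      (fun N : ℕ =>
        (Nat.card {w : Fin k → Fin N × Bool //
            (List.ofFn fun j =>
              if (w j).2 then artinGen M (s (((w j).1 : ℕ)))
              else (artinGen M (s (((w j).1 : ℕ))))⁻¹).prod = 1} : ℝ)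
          / (Real.sqrt (2 * N)) ^ k)
      atTop
      (𝓝 (if Even k then (catalan (k / 2) : ℝ) else 0)) := by
  classical
  let t (N : ℕ) : Fin N ↪ S := Fin.valEmbedding.trans ⟨s, hs⟩
  have h_card (N : ℕ) : (Finset.univ.map (t N)).card = N := by simp
  exact (tendsto_card_trivialWords_div h_card
    (fun _ ↦ ArtinGroup.mk_eq_one_or_two_mul_card_lt hM) k).congr fun N ↦ by
      rw [← natCard_prod_eq_one_eq_card_trivialWords (t N) (artinGen M) k]
      rfl

/-- **Central limit theorem for Artin groups of extra-large type.**
Let `M` be a Coxeter matrix of extra-large type (`M s t = 0` or `M s t ≥ 4` for `s ≠ t`,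
`0` encoding `∞`) on a countably infinite type `S`, with Artin group `A` and generators `a`,
and fix an injective enumeration `s : ℕ → S`.  Then for every `k`, the normalized moment
`(2N)^(-k/2) · #{((i₁,ε₁), …, (i_k,ε_k)) : a_{s i₁}^{ε₁} ⋯ a_{s i_k}^{ε_k} = 1}` (letters
ranging over `{0, …, N-1}`, signs over `{±1}`) converges, as `N → ∞`, to `0` if `k` is odd
and to the Catalan number `C_n` if `k = 2n` is even. -/
theorem artin_clt {S : Type*} [Countable S] [Infinite S]
    (M : CoxeterMatrix S) (hM : ∀ s t : S, s ≠ t → M s t = 0 ∨ 4 ≤ M s t)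
    (s : ℕ → S) (hs : Function.Injective s) (k : ℕ) :
    Tendsto
      (fun N : ℕ =>
        (Nat.card {w : Fin k → Fin N × Bool //
            (List.ofFn fun j =>
              if (w j).2 then artinGen M (s (((w j).1 : ℕ)))
              else (artinGen M (s (((w j).1 : ℕ))))⁻¹).prod = 1} : ℝ)
          / (Real.sqrt (2 * N)) ^ k)
      atTop
      (𝓝 (if Even k then (catalan (k / 2) : ℝ) else 0)) := by
  exact artin_clt_general M (fun u v h ↦ by have := hM u v h; omega) s hs k
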